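/- Let m ≥ 2 and let v : ℝⁿ → ℝᵐ be a map. Then the following are equivalent: (a) for every δ > 0, every subset A ⊆ ℝⁿ, and every 1-Lipschitz map u : A → ℝᵐ with ‖v(x) − u(x)‖ ≤ δ for all x ∈ A, there exists a 1-Lipschitz map ũ : ℝⁿ → ℝᵐ with ũ(x) = u(x) for all x ∈ A and ‖v(x) − ũ(x)‖ ≤ δ for all x ∈ ℝⁿ; (b) v is affine and 1-Lipschitz. -/

import Mathlib

/-!
Let `f` be affine and nonexpansive, and let `u` be a nonexpansive map on `A` that stays `δ`-close
to `f`. By Zorn's lemma it suffices to extend `u` to one more point `x`, i.e. to find a point of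
`closedBall (f x) δ` lying in all balls `closedBall (u a) ‖x - a‖`. By weak compactness and the
minimax theorem it is enough that, for all finitely many `a i` and all convex weights `c i`, some
`w ∈ closedBall (f x) δ` satisfies `∑ c i * ‖w - u (a i)‖ ^ 2 ≤ ∑ c i * ‖x - a i‖ ^ 2`. With `ā` and
`ū` the barycenters of the `a i` and the `u (a i)`, the choice `w = f x + (ū - f ā)` works: `ū` is
`δ`-close to `f ā`, and `‖w - ū‖ = ‖f x - f ā‖ ≤ ‖x - ā‖`, while the variance of the `u (a i)` is at
most that of the `a i`.

Conversely, suppose `v` sends a point `z` of a segment `[x, y]` away from where the affine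
interpolation of `v x` and `v y` would, with error `e ≠ 0`. Move `v x` and `v y` by a large common
multiple of `-e`, and apart in a direction orthogonal to `e` until their distance is `‖x - y‖`. A
nonexpansive map with these two values is forced to be affine on `[x, y]`, so at `z` its distance
to `v z` exceeds the larger of the distances at `x` and `y`.
-/

open Metric Set

section Barycenters

lemma map_sum_smul_of_sum_eq_one {ι R V W : Type*} [Fintype ι] [Ring R] [AddCommGroup V]
    [Module R V] [AddCommGroup W] [Module R W] (f : V →ᵃ[R] W) {c : ι → R} (hc : ∑ i, c i = 1)
    (X : ι → V) : f (∑ i, c i • X i) = ∑ i, c i • f (X i) := by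
  have decomp (x : V) : f x = f.linear x + f 0 := congrFun f.decomp x
  simp only [decomp (∑ i, c i • X i), decomp (X _), map_sum, map_smul, smul_add,
    Finset.sum_add_distrib, ← Finset.sum_smul, hc, one_smul]

variable {ι E F : Type*} [Fintype ι] [NormedAddCommGroup E] [InnerProductSpace ℝ E]
  [NormedAddCommGroup F] [InnerProductSpace ℝ F]

lemma norm_sum_smul_sq (c : ι → ℝ) (V : ι → F) :
    ‖∑ i, c i • V i‖ ^ 2 = ∑ i, ∑ j, c i * c j * inner ℝ (V i) (V j) := by
  rw [← real_inner_self_eq_norm_sq, sum_inner]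
  simp only [inner_sum, real_inner_smul_left, real_inner_smul_right]
  exact Finset.sum_congr rfl fun i _ ↦ Finset.sum_congr rfl fun j _ ↦ by ring

lemma sum_mul_norm_sub_sq {c : ι → ℝ} (hc : ∑ i, c i = 1) (U : ι → F) (p : F) :
    ∑ i, c i * ‖p - U i‖ ^ 2 =
      ‖p - ∑ i, c i • U i‖ ^ 2 + (∑ i, ∑ j, c i * c j * ‖U i - U j‖ ^ 2) / 2 := by
  have barycenter_sub : p - ∑ i, c i • U i = ∑ i, c i • (p - U i) := by
    simp only [smul_sub, Finset.sum_sub_distrib, ← Finset.sum_smul, hc, one_smul]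
  have norm_sub_sq (i j : ι) : c i * c j * ‖U i - U j‖ ^ 2 =
      c j * (c i * ‖p - U i‖ ^ 2) + c i * (c j * ‖p - U j‖ ^ 2) -
        2 * (c i * c j * inner ℝ (p - U i) (p - U j)) := by
    rw [← sub_sub_sub_cancel_left (U j) (U i) p, norm_sub_sq_real, real_inner_comm]
    ring
  simp only [barycenter_sub, norm_sum_smul_sq, norm_sub_sq, Finset.sum_sub_distrib,
    Finset.sum_add_distrib, ← Finset.mul_sum, ← Finset.sum_mul, hc, one_mul]
  ring

lemma sum_mul_norm_sub_sq_le_of_nonexpansive {c : ι → ℝ} (hc : c ∈ stdSimplex ℝ ι)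
    {X : ι → E} {U : ι → F} (hXU : ∀ i j, ‖U i - U j‖ ≤ ‖X i - X j‖) {x : E} {p : F}
    (hp : ‖p - ∑ i, c i • U i‖ ≤ ‖x - ∑ i, c i • X i‖) :
    ∑ i, c i * ‖p - U i‖ ^ 2 ≤ ∑ i, c i * ‖x - X i‖ ^ 2 := by
  rw [sum_mul_norm_sub_sq hc.2, sum_mul_norm_sub_sq hc.2]
  gcongr with i _ j _
  · exact mul_nonneg (hc.1 i) (hc.1 j)
  · exact hXU i j

lemma exists_mem_closedBall_sum_mul_norm_sub_sq_le {f : E →ᵃ[ℝ] F}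
    (hf : ∀ x y, ‖f x - f y‖ ≤ ‖x - y‖) {δ : ℝ} {X : ι → E} {U : ι → F}
    (hXU : ∀ i j, ‖U i - U j‖ ≤ ‖X i - X j‖) (hU : ∀ i, ‖f (X i) - U i‖ ≤ δ)
    {c : ι → ℝ} (hc : c ∈ stdSimplex ℝ ι) (x : E) :
    ∃ w ∈ closedBall (f x) δ, ∑ i, c i * ‖w - U i‖ ^ 2 ≤ ∑ i, c i * ‖x - X i‖ ^ 2 := by
  set Xbar := ∑ i, c i • X i with hXbar
  set Ubar := ∑ i, c i • U i
  have barycenters_close : f Xbar - Ubar ∈ closedBall 0 δ := by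
    rw [hXbar, map_sum_smul_of_sum_eq_one f hc.2, ← Finset.sum_sub_distrib]
    simp only [← smul_sub]
    exact (convex_closedBall 0 δ).sum_mem (fun i _ ↦ hc.1 i) hc.2 fun i _ ↦ by simpa using hU i
  refine ⟨f x + (Ubar - f Xbar), ?_, sum_mul_norm_sub_sq_le_of_nonexpansive hc hXU ?_⟩
  · simpa [norm_sub_rev] using barycenters_close
  · convert hf x Xbar using 2
    abel

end Barycenters

section Intersections

lemma exists_forall_neg_of_forall_stdSimplex {ι F : Type*} [Fintype ι] [Nonempty ι]
    [AddCommGroup F] [Module ℝ F] [TopologicalSpace F] [IsTopologicalAddGroup F]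
    [ContinuousSMul ℝ F] {Y : Set F} {g : ι → F → ℝ} (hY : Convex ℝ Y)
    (g_convex : ∀ i, ConvexOn ℝ Y (g i)) (g_cont : ∀ i, ContinuousOn (g i) Y)
    (h : ∀ c ∈ stdSimplex ℝ ι, ∃ y ∈ Y, ∑ i, c i * g i y < 0) :
    ∃ y ∈ Y, ∀ i, g i y < 0 := by
  classical
  let f : (ι → ℝ) → F → ℝ := fun c y ↦ -∑ i, c i * g i y
  have f_cont (y : F) : Continuous fun c ↦ f c y := by fun_prop
  have f_convex (y : F) : ConvexOn ℝ (stdSimplex ℝ ι) fun c ↦ f c y := by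
    refine ⟨convex_stdSimplex ℝ ι, fun c _ d _ a b _ _ _ ↦ le_of_eq ?_⟩
    simp only [f, Pi.add_apply, Pi.smul_apply, smul_eq_mul, add_mul, Finset.sum_add_distrib,
      mul_assoc, ← Finset.mul_sum]
    ring
  have f_concave {c : ι → ℝ} (hc : c ∈ stdSimplex ℝ ι) : ConcaveOn ℝ Y (f c) := by
    have sum_convex : ConvexOn ℝ Y (∑ i, c i • g i) :=
      Finset.sum_induction _ (ConvexOn ℝ Y) (fun _ _ ↦ ConvexOn.add) (convexOn_const 0 hY)
        fun i _ ↦ (g_convex i).smul (hc.1 i)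
    have f_eq : f c = -∑ i, c i • g i := by
      ext y
      simp [f]
    exact f_eq ▸ sum_convex.neg
  obtain ⟨s, hs⟩ := (isCompact_stdSimplex ℝ ι).elim_finite_subcover
    (fun y : Y ↦ {c | 0 < f c y}) (fun y ↦ isOpen_lt continuous_const (f_cont y))
    (fun c hc ↦ by simpa [f] using h c hc)
  obtain ⟨y, hyY, hy⟩ := Sion.exists_lt_iInf_of_lt_iInf_of_finite
    (f := f) (s := Subtype.val '' (s : Set Y)) (t := 0)
    ⟨_, single_mem_stdSimplex ℝ (Classical.arbitrary ι)⟩ (isCompact_stdSimplex ℝ ι)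
    (fun y _ ↦ (f_cont y).lowerSemicontinuous.lowerSemicontinuousOn _)
    (fun y _ ↦ (f_convex y).quasiconvexOn) hY
    (fun c _ ↦ ContinuousOn.upperSemicontinuousOn (by fun_prop))
    (fun c hc ↦ (f_concave hc).quasiconcaveOn) (convex_stdSimplex ℝ ι)
    (s.finite_toSet.image _) (by simp) (fun c hc ↦ by simpa using hs hc)
  refine ⟨y, hyY, fun i ↦ ?_⟩
  simpa [f, Pi.single_apply] using hy _ (single_mem_stdSimplex ℝ i)

-- The Riesz isomorphism carries closed balls to weak-* compact sets.
lemma nonempty_closedBall_inter_iInter_closedBall {κ F : Type*} [NormedAddCommGroup F]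
    [InnerProductSpace ℝ F] [CompleteSpace F] {p : F} {r : ℝ} {q : κ → F} {R : κ → ℝ}
    (h : ∀ s : Finset κ, (closedBall p r ∩ ⋂ k ∈ s, closedBall (q k) (R k)).Nonempty) :
    (closedBall p r ∩ ⋂ k, closedBall (q k) (R k)).Nonempty := by
  let Φ : F ≃ WeakDual ℝ F :=
    (InnerProductSpace.toDual ℝ F).toEquiv.trans WeakDual.toStrongDual.toEquiv.symm
  have image_closedBall (x : F) (ρ : ℝ) : Φ '' closedBall x ρ =
      WeakDual.toStrongDual ⁻¹' closedBall (InnerProductSpace.toDual ℝ F x) ρ := by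
    rw [Equiv.image_eq_preimage_symm, ← LinearIsometryEquiv.image_closedBall,
      LinearIsometryEquiv.image_eq_preimage_symm]
    rfl
  have compact : IsCompact (Φ '' closedBall p r) := by
    rw [image_closedBall]
    exact WeakDual.isCompact_closedBall ..
  have closed (k : κ) : IsClosed (Φ '' closedBall (q k) (R k)) := by
    rw [image_closedBall]
    exact WeakDual.isClosed_closedBall ..
  have weak_inter := compact.inter_iInter_nonempty (fun k ↦ Φ '' closedBall (q k) (R k)) closed
    fun s ↦ by simpa [← image_iInter Φ.bijective, ← image_inter Φ.injective] using h s
  simpa [← image_iInter Φ.bijective, ← image_inter Φ.injective] using weak_inter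

variable {ι E F : Type*} [NormedAddCommGroup E] [InnerProductSpace ℝ E]
  [NormedAddCommGroup F] [InnerProductSpace ℝ F]

lemma exists_mem_closedBall_forall_norm_sub_lt_of_finite [Finite ι] {f : E →ᵃ[ℝ] F}
    (hf : ∀ x y, ‖f x - f y‖ ≤ ‖x - y‖) {δ : ℝ} (hδ : 0 ≤ δ) {X : ι → E} {U : ι → F}
    (hXU : ∀ i j, ‖U i - U j‖ ≤ ‖X i - X j‖) (hU : ∀ i, ‖f (X i) - U i‖ ≤ δ)
    {x : E} {R : ι → ℝ} (hR : ∀ i, ‖x - X i‖ < R i) :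
    ∃ w ∈ closedBall (f x) δ, ∀ i, ‖w - U i‖ < R i := by
  cases nonempty_fintype ι
  rcases isEmpty_or_nonempty ι with _ | _
  · exact ⟨f x, mem_closedBall_self hδ, isEmptyElim⟩
  have R_pos (i : ι) : 0 < R i := (norm_nonneg _).trans_lt (hR i)
  have convex (i : ι) : ConvexOn ℝ (closedBall (f x) δ) fun w ↦ ‖w - U i‖ ^ 2 - R i ^ 2 := by
    simp only [← dist_eq_norm]
    simp only [sub_eq_add_neg]
    exact ((convexOn_dist (U i) (convex_closedBall (f x) δ)).pow
      (fun _ _ ↦ dist_nonneg) 2).add_const _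
  obtain ⟨w, hw, hwU⟩ := exists_forall_neg_of_forall_stdSimplex (convex_closedBall (f x) δ) convex
    (fun i ↦ by fun_prop) fun c hc ↦ by
      obtain ⟨w, hw, hwX⟩ := exists_mem_closedBall_sum_mul_norm_sub_sq_le hf hXU hU hc x
      obtain ⟨j, -, hj⟩ :=
        Finset.exists_lt_of_sum_lt (f := 0) (g := c) (s := .univ) (by simp [hc.2])
      have sum_lt : ∑ i, c i * ‖x - X i‖ ^ 2 < ∑ i, c i * R i ^ 2 := by
        refine Finset.sum_lt_sum (fun i _ ↦ ?_) ⟨j, Finset.mem_univ j, ?_⟩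
        · have := hc.1 i
          grw [hR i]
        · have : 0 < c j := hj
          gcongr
          exact hR j
      refine ⟨w, hw, ?_⟩
      simp only [mul_sub, Finset.sum_sub_distrib]
      linarith
  exact ⟨w, hw, fun i ↦ lt_of_pow_lt_pow_left₀ 2 (R_pos i).le (by linarith [hwU i])⟩

lemma exists_mem_closedBall_forall_norm_sub_le [CompleteSpace F] {f : E →ᵃ[ℝ] F}
    (hf : ∀ x y, ‖f x - f y‖ ≤ ‖x - y‖) {δ : ℝ} (hδ : 0 ≤ δ) {X : ι → E} {U : ι → F}
    (hXU : ∀ i j, ‖U i - U j‖ ≤ ‖X i - X j‖) (hU : ∀ i, ‖f (X i) - U i‖ ≤ δ) (x : E) :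
    ∃ w ∈ closedBall (f x) δ, ∀ i, ‖w - U i‖ ≤ ‖x - X i‖ := by
  obtain ⟨w, hw, hwU⟩ := nonempty_closedBall_inter_iInter_closedBall (p := f x) (r := δ)
    (q := fun k : (i : ι) × Ioi ‖x - X i‖ ↦ U k.1) (R := fun k ↦ k.2) fun s ↦ by
      obtain ⟨w, hw, hwU⟩ := exists_mem_closedBall_forall_norm_sub_lt_of_finite hf hδ
        (fun k l : s ↦ hXU k.1.1 l.1.1) (fun k ↦ hU k.1.1) (fun k ↦ k.1.2.2)
      refine ⟨w, hw, mem_iInter₂.2 fun k hk ↦ ?_⟩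
      exact mem_closedBall_iff_norm.2 (hwU ⟨k, hk⟩).le
  refine ⟨w, hw, fun i ↦ le_of_forall_gt_imp_ge_of_dense fun r hr ↦ ?_⟩
  exact mem_closedBall_iff_norm.1 (mem_iInter.1 hwU ⟨i, r, hr⟩)

end Intersections

section Extension

variable {E F : Type*} [NormedAddCommGroup E] [NormedAddCommGroup F]

/-- `G` is the graph of a nonexpansive map from a subset of `E` to `F` that stays within distance
`δ` of `v`. Ordered by inclusion, these graphs are the partial extensions to which Zorn's lemma is
applied. That `G` is single-valued follows from `norm_sub_le`. -/
structure IsNonexpansiveGraphNear (v : E → F) (δ : ℝ) (G : Set (E × F)) : Prop where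
  norm_sub_le : ∀ p ∈ G, ∀ q ∈ G, ‖p.2 - q.2‖ ≤ ‖p.1 - q.1‖
  norm_sub_le_radius : ∀ p ∈ G, ‖v p.1 - p.2‖ ≤ δ

/-- Every nonexpansive map from a subset of `E` that stays within distance `δ > 0` of `v` extends
to a nonexpansive map on `E` that stays within the same distance of `v`. A map on `A` is
represented by a map on `E`, of which only the values on `A` matter. -/
def HasNonexpansiveExtensionsNear (v : E → F) : Prop :=
  ∀ δ : ℝ, 0 < δ → ∀ A : Set E, ∀ u : E → F,
    (∀ x ∈ A, ∀ y ∈ A, ‖u x - u y‖ ≤ ‖x - y‖) →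
    (∀ x ∈ A, ‖v x - u x‖ ≤ δ) →
    ∃ uext : E → F, (∀ x y, ‖uext x - uext y‖ ≤ ‖x - y‖) ∧ (∀ x ∈ A, uext x = u x) ∧
      ∀ x, ‖v x - uext x‖ ≤ δ

namespace IsNonexpansiveGraphNear

lemma sUnion {v : E → F} {δ : ℝ} {C : Set (Set (E × F))} (hC : IsChain (· ⊆ ·) C)
    (h : ∀ G ∈ C, IsNonexpansiveGraphNear v δ G) : IsNonexpansiveGraphNear v δ (⋃₀ C) where
  norm_sub_le := by
    rintro p ⟨G, hG, hp⟩ q ⟨H, hH, hq⟩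
    rcases hC.total hG hH with hGH | hHG
    · exact (h H hH).norm_sub_le p (hGH hp) q hq
    · exact (h G hG).norm_sub_le p hp q (hHG hq)
  norm_sub_le_radius := fun p ⟨G, hG, hp⟩ ↦ (h G hG).norm_sub_le_radius p hp

variable [InnerProductSpace ℝ E] [InnerProductSpace ℝ F] [CompleteSpace F]
  {f : E →ᵃ[ℝ] F} {δ : ℝ} {G : Set (E × F)}

lemma exists_insert (hG : IsNonexpansiveGraphNear f δ G) (hf : ∀ x y, ‖f x - f y‖ ≤ ‖x - y‖)
    (hδ : 0 ≤ δ) (x : E) : ∃ w, IsNonexpansiveGraphNear f δ (insert (x, w) G) := by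
  obtain ⟨w, hw, hwG⟩ := exists_mem_closedBall_forall_norm_sub_le hf hδ
    (fun p q : G ↦ hG.norm_sub_le p p.2 q q.2) (fun p ↦ hG.norm_sub_le_radius p p.2) x
  refine ⟨w, ?_, ?_⟩
  · rintro p (rfl | hp) q (rfl | hq)
    · simp
    · exact hwG ⟨q, hq⟩
    · simpa only [norm_sub_rev] using hwG ⟨p, hp⟩
    · exact hG.norm_sub_le p hp q hq
  · rintro p (rfl | hp)
    · exact mem_closedBall_iff_norm'.1 hw
    · exact hG.norm_sub_le_radius p hp

lemma exists_superset_total (hG : IsNonexpansiveGraphNear f δ G)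
    (hf : ∀ x y, ‖f x - f y‖ ≤ ‖x - y‖) (hδ : 0 ≤ δ) :
    ∃ M, G ⊆ M ∧ IsNonexpansiveGraphNear f δ M ∧ ∀ x, ∃ w, (x, w) ∈ M := by
  obtain ⟨M, hGM, hM⟩ := zorn_subset_nonempty {H | IsNonexpansiveGraphNear f δ H}
    (fun C hC chain _ ↦ ⟨⋃₀ C, sUnion chain hC, fun _ ↦ subset_sUnion_of_mem⟩) G hG
  refine ⟨M, hGM, hM.prop, fun x ↦ ?_⟩
  obtain ⟨w, hw⟩ := hM.prop.exists_insert hf hδ x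
  exact ⟨w, hM.mem_of_prop_insert hw⟩

end IsNonexpansiveGraphNear

lemma hasNonexpansiveExtensionsNear_affineMap [InnerProductSpace ℝ E] [InnerProductSpace ℝ F]
    [CompleteSpace F] {f : E →ᵃ[ℝ] F} (hf : ∀ x y, ‖f x - f y‖ ≤ ‖x - y‖) :
    HasNonexpansiveExtensionsNear f := by
  intro δ hδ A u hu hfu
  have graph : IsNonexpansiveGraphNear f δ ((fun x ↦ (x, u x)) '' A) :=
    ⟨by simpa using hu, by simpa using hfu⟩
  obtain ⟨M, hAM, hM, total⟩ := graph.exists_superset_total hf hδ.le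
  choose uext huext using total
  refine ⟨uext, fun x y ↦ hM.norm_sub_le _ (huext x) _ (huext y), fun x hx ↦ ?_,
    fun x ↦ hM.norm_sub_le_radius _ (huext x)⟩
  simpa [sub_eq_zero] using hM.norm_sub_le _ (huext x) _ (hAM (mem_image_of_mem _ hx))

lemma exists_affineMap_coe_eq [NormedSpace ℝ E] [NormedSpace ℝ F] {v : E → F}
    (hv : Continuous v)
    (hvt : ∀ x y, ∀ t ∈ Icc (0 : ℝ) 1, v (t • x + (1 - t) • y) = t • v x + (1 - t) • v y) :
    ∃ f : E →ᵃ[ℝ] F, ⇑f = v := by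
  refine ⟨AffineMap.ofMapMidpoint v (fun x y ↦ ?_) hv, rfl⟩
  have one_sub_half : (1 : ℝ) - 2⁻¹ = 2⁻¹ := by norm_num
  simpa [midpoint_eq_smul_add, one_sub_half] using hvt x y 2⁻¹ (by norm_num)

end Extension

section Rigidity

variable {E F : Type*} [NormedAddCommGroup E] [NormedAddCommGroup F]

lemma HasNonexpansiveExtensionsNear.norm_map_sub_le {v : E → F}
    (h : HasNonexpansiveExtensionsNear v) (x y : E) : ‖v x - v y‖ ≤ ‖x - y‖ := by
  refine le_of_forall_pos_le_add fun ε hε ↦ ?_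
  obtain ⟨w, hw, -, hvw⟩ := h (ε / 2) (half_pos hε) ∅ v (by simp) (by simp)
  calc ‖v x - v y‖ = ‖(v x - w x) + (w x - w y) + (w y - v y)‖ := by congr 1; abel
    _ ≤ ‖v x - w x‖ + ‖w x - w y‖ + ‖w y - v y‖ := norm_add₃_le
    _ ≤ ε / 2 + ‖x - y‖ + ε / 2 := by
      gcongr
      exacts [hvw x, hw x y, norm_sub_rev (w y) (v y) ▸ hvw y]
    _ = ‖x - y‖ + ε := by ring

variable [NormedSpace ℝ E] [NormedSpace ℝ F] [StrictConvexSpace ℝ F]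

lemma map_combo_of_norm_sub_eq {w : E → F}
    (hw : ∀ x y, ‖w x - w y‖ ≤ ‖x - y‖) {x y : E} (hxy : ‖w x - w y‖ = ‖x - y‖)
    {t : ℝ} (ht : t ∈ Icc (0 : ℝ) 1) : w (t • x + (1 - t) • y) = t • w x + (1 - t) • w y := by
  set z := t • x + (1 - t) • y with hz
  have norm_sub_z : ‖y - z‖ = t * ‖x - y‖ := by
    rw [show y - z = t • (y - x) by rw [hz]; module, norm_smul_of_nonneg ht.1, norm_sub_rev]
  have norm_z_sub : ‖z - x‖ = (1 - t) * ‖x - y‖ := by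
    rw [show z - x = (1 - t) • (y - x) by rw [hz]; module,
      norm_smul_of_nonneg (sub_nonneg.2 ht.2), norm_sub_rev]
  have triangle := norm_sub_le_norm_sub_add_norm_sub (w y) (w z) (w x)
  rw [norm_sub_rev, hxy] at triangle
  have eq_lineMap : w z = AffineMap.lineMap (w y) (w x) t := by
    apply eq_lineMap_of_dist_eq_mul_of_dist_eq_mul <;>
      rw [dist_eq_norm, dist_eq_norm, norm_sub_rev (w y) (w x), hxy]
    · linarith [hw y z, hw z x]
    · linarith [hw y z, hw z x]
  rw [eq_lineMap, AffineMap.lineMap_apply_module, add_comm]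

lemma HasNonexpansiveExtensionsNear.norm_map_combo_sub_combo_le {v : E → F}
    (h : HasNonexpansiveExtensionsNear v) {δ : ℝ} (hδ : 0 < δ) {x y : E} {a b : F}
    (ha : ‖v x - a‖ ≤ δ) (hb : ‖v y - b‖ ≤ δ)
    (hab : ‖a - b‖ = ‖x - y‖) {t : ℝ} (ht : t ∈ Icc (0 : ℝ) 1) :
    ‖v (t • x + (1 - t) • y) - (t • a + (1 - t) • b)‖ ≤ δ := by
  classical
  let u : E → F := Function.update (fun _ ↦ a) y b
  have u_right : u y = b := Function.update_self ..
  have u_left : u x = a := by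
    rcases eq_or_ne x y with rfl | hne
    · rw [u_right, eq_comm, ← sub_eq_zero, ← norm_eq_zero, hab, sub_self, norm_zero]
    · exact Function.update_of_ne hne ..
  obtain ⟨w, hw, hwu, hvw⟩ := h δ hδ {x, y} u
    (by
      rintro p (rfl | rfl) q (rfl | rfl)
      · simp
      · rw [u_left, u_right, hab]
      · rw [u_left, u_right, norm_sub_rev, hab, norm_sub_rev]
      · simp)
    (by
      rintro p (rfl | rfl)
      · rwa [u_left]
      · rwa [u_right])
  have w_left : w x = a := (hwu x (by simp)).trans u_left
  have w_right : w y = b := (hwu y (by simp)).trans u_right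
  have w_combo := map_combo_of_norm_sub_eq hw (x := x) (y := y) (by rw [w_left, w_right, hab]) ht
  rw [w_left, w_right] at w_combo
  exact w_combo ▸ hvw _

end Rigidity

section Displacement

lemma exists_norm_add_smul_eq {F : Type*} [NormedAddCommGroup F] [NormedSpace ℝ F] {d f : F}
    {L : ℝ} (hf : ‖f‖ = 1) (hd : ‖d‖ ≤ L) : ∃ s : ℝ, ‖d + s • f‖ = L := by
  have L_nonneg : 0 ≤ L := (norm_nonneg d).trans hd
  have continuous_norm_add : Continuous fun s : ℝ ↦ ‖d + s • f‖ := by fun_prop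
  have le_norm_add : L ≤ ‖d + (L + ‖d‖) • f‖ := by
    have h := norm_sub_le (d + (L + ‖d‖) • f) d
    rw [add_sub_cancel_left, norm_smul_of_nonneg (by positivity), hf] at h
    linarith
  exact mem_range_of_exists_le_of_exists_ge continuous_norm_add ⟨0, by simpa⟩ ⟨_, le_norm_add⟩

variable {E F : Type*} [NormedAddCommGroup E] [NormedSpace ℝ E] [NormedAddCommGroup F]
  [InnerProductSpace ℝ F]

lemma exists_norm_eq_one_inner_eq_zero (hF : 2 ≤ Module.rank ℝ F) (e : F) :
    ∃ f : F, ‖f‖ = 1 ∧ inner ℝ e f = 0 := by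
  have span_ne_top : Submodule.span ℝ {e} ≠ ⊤ := fun h ↦ by
    have rank_le := (rank_span_le (R := ℝ) {e}).trans_eq (Cardinal.mk_singleton e)
    rw [h, rank_top] at rank_le
    exact absurd (hF.trans rank_le) (by norm_num)
  obtain ⟨f, hf, f_ne⟩ := Submodule.exists_mem_ne_zero_of_ne_bot
    (mt Submodule.orthogonal_eq_bot_iff.1 span_ne_top)
  refine ⟨‖f‖⁻¹ • f, norm_smul_inv_norm f_ne, ?_⟩
  rw [real_inner_smul_right, Submodule.mem_orthogonal_singleton_iff_inner_right.1 hf, mul_zero]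

lemma norm_smul_add_smul_sq_of_inner_eq_zero {e f : F} (hf : ‖f‖ = 1) (hef : inner ℝ e f = 0)
    (a b : ℝ) : ‖a • e + b • f‖ ^ 2 = a ^ 2 * ‖e‖ ^ 2 + b ^ 2 := by
  simp [norm_add_sq_real, real_inner_smul_left, real_inner_smul_right, hef, norm_smul, hf, mul_pow]

lemma exists_displacement_pair (hF : 2 ≤ Module.rank ℝ F) {d e : F} {L : ℝ} (hd : ‖d‖ ≤ L)
    (he : e ≠ 0) : ∃ p q : F, ‖p‖ = ‖q‖ ∧ p ≠ 0 ∧ ‖d + (p - q)‖ = L ∧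
      ∀ t : ℝ, ‖p‖ < ‖e - (t • p + (1 - t) • q)‖ := by
  obtain ⟨f, hf, hef⟩ := exists_norm_eq_one_inner_eq_zero hF e
  obtain ⟨s, hs⟩ := exists_norm_add_smul_eq hf hd
  have pythagoras := norm_smul_add_smul_sq_of_inner_eq_zero hf hef
  have norm_e_pos : 0 < ‖e‖ := norm_pos_iff.2 he
  -- With this `R`, `(R + 2) ^ 2 * ‖e‖ ^ 2` exceeds `(R + 1) ^ 2 * ‖e‖ ^ 2 + (s / 2) ^ 2`.
  let R : ℝ := s ^ 2 / ‖e‖ ^ 2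
  have R_mul : R * ‖e‖ ^ 2 = s ^ 2 := div_mul_cancel₀ _ (by positivity)
  let p := (-(R + 1)) • e + (s / 2) • f
  let q := (-(R + 1)) • e + (-(s / 2)) • f
  have norm_p_sq : ‖p‖ ^ 2 = (R + 1) ^ 2 * ‖e‖ ^ 2 + s ^ 2 / 4 := by
    rw [pythagoras]; ring
  have norm_q_sq : ‖q‖ ^ 2 = (R + 1) ^ 2 * ‖e‖ ^ 2 + s ^ 2 / 4 := by
    rw [pythagoras]; ring
  refine ⟨p, q, ?_, fun hp ↦ ?_, ?_, fun t ↦ lt_of_pow_lt_pow_left₀ 2 (norm_nonneg _) ?_⟩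
  · exact (sq_eq_sq₀ (norm_nonneg p) (norm_nonneg q)).1 (norm_p_sq.trans norm_q_sq.symm)
  · have : 0 < ‖p‖ ^ 2 := by rw [norm_p_sq]; positivity
    simp [hp] at this
  · rw [← hs]
    congr 2
    module
  · have residual : e - (t • p + (1 - t) • q) = (R + 2) • e + (-((t - 1 / 2) * s)) • f := by
      module
    rw [norm_p_sq, residual, pythagoras]
    nlinarith [sq_nonneg ((t - 1 / 2) * s), sq_nonneg s]

lemma HasNonexpansiveExtensionsNear.map_combo {v : E → F} (h : HasNonexpansiveExtensionsNear v)
    (hF : 2 ≤ Module.rank ℝ F) (x y : E) {t : ℝ} (ht : t ∈ Icc (0 : ℝ) 1) :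
    v (t • x + (1 - t) • y) = t • v x + (1 - t) • v y := by
  by_contra hne
  obtain ⟨p, q, norm_eq, p_ne, stretched, far⟩ :=
    exists_displacement_pair hF (h.norm_map_sub_le x y) (sub_ne_zero.2 hne)
  have near := h.norm_map_combo_sub_combo_le (norm_pos_iff.2 p_ne) (x := x) (y := y)
    (a := v x + p) (b := v y + q) (by simp) (by simp [norm_eq])
    (by rw [add_sub_add_comm, stretched]) ht
  have combo_add : t • (v x + p) + (1 - t) • (v y + q) =
      (t • v x + (1 - t) • v y) + (t • p + (1 - t) • q) := by module
  rw [combo_add, ← sub_sub] at near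
  exact (far t).not_ge near

end Displacement

theorem stmt_9_general {E F : Type*} [NormedAddCommGroup E] [InnerProductSpace ℝ E]
    [NormedAddCommGroup F] [InnerProductSpace ℝ F] [CompleteSpace F]
    (hF : 2 ≤ Module.rank ℝ F) (v : E → F) :
    HasNonexpansiveExtensionsNear v ↔
      (∀ x y, ∀ t ∈ Icc (0 : ℝ) 1, v (t • x + (1 - t) • y) = t • v x + (1 - t) • v y) ∧
        ∀ x y, ‖v x - v y‖ ≤ ‖x - y‖ := by
  refine ⟨fun h ↦ ⟨fun x y t ht ↦ h.map_combo hF x y ht, h.norm_map_sub_le⟩, ?_⟩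
  rintro ⟨map_combo, nonexpansive⟩
  have lipschitz : LipschitzWith 1 v := .of_dist_le_mul fun x y ↦ by
    simpa [dist_eq_norm] using nonexpansive x y
  obtain ⟨f, rfl⟩ := exists_affineMap_coe_eq lipschitz.continuous map_combo
  exact hasNonexpansiveExtensionsNear_affineMap nonexpansive

theorem stmt_9 (n m : ℕ) (hm : 2 ≤ m)
    (v : EuclideanSpace ℝ (Fin n) → EuclideanSpace ℝ (Fin m)) :
    (∀ δ : ℝ, 0 < δ → ∀ A : Set (EuclideanSpace ℝ (Fin n)),
      ∀ u : EuclideanSpace ℝ (Fin n) → EuclideanSpace ℝ (Fin m),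
        (∀ x ∈ A, ∀ y ∈ A, ‖u x - u y‖ ≤ ‖x - y‖) →
        (∀ x ∈ A, ‖v x - u x‖ ≤ δ) →
        ∃ uext : EuclideanSpace ℝ (Fin n) → EuclideanSpace ℝ (Fin m),
          (∀ x y : EuclideanSpace ℝ (Fin n), ‖uext x - uext y‖ ≤ ‖x - y‖) ∧
          (∀ x ∈ A, uext x = u x) ∧
          (∀ x : EuclideanSpace ℝ (Fin n), ‖v x - uext x‖ ≤ δ)) ↔
    ((∀ x y : EuclideanSpace ℝ (Fin n), ∀ t ∈ Set.Icc (0 : ℝ) 1,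
        v (t • x + (1 - t) • y) = t • v x + (1 - t) • v y) ∧
      (∀ x y : EuclideanSpace ℝ (Fin n), ‖v x - v y‖ ≤ ‖x - y‖)) := by
  exact stmt_9_general (by simpa [← Module.finrank_eq_rank] using hm) v
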